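/- The purified distance is a metric on sub-normalized states: for n×n positive semidefinite complex matrices ρ, τ, σ with trace at most 1, (i) P(ρ,τ) ≥ 0, and P(ρ,τ) = 0 if and only if ρ = τ; (ii) P(ρ,τ) = P(τ,ρ); (iii) P(ρ,τ) ≤ P(ρ,σ) + P(σ,τ). -/

import Mathlib

/-!
Write `s = √ρ`, `t = √τ`.  The number `tr √(√τ ρ √τ)` is the trace norm of `A = s t`, and a singular
value decomposition `A = W D Vᴴ` shows that it is the maximum of `Re tr (A U)` over unitary `U`
(`re_trace_mul_le`, `exists_re_trace_mul_eq`).  Thus `√F̄(ρ,τ)` is the largest real inner product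
between the unit vectors `(s, √(1 - tr ρ))` and `(t U, √(1 - tr τ))` of the Hilbert space
`ℂ^{n×n} ⊕ ℂ`; this is Uhlmann's theorem, the vectors being purifications.

* Definiteness: if the inner product of two unit vectors is at least `1`, they coincide, so
  `s = t U` and `ρ = s sᴴ = t tᴴ = τ`.
* Symmetry: `Re tr (t s U) = Re tr (s t Uᴴ)`.
* Triangle inequality: the purifications of `ρ`, `σ`, `τ` can be chosen so that both `√F̄(ρ,σ)` and
  `√F̄(σ,τ)` are attained; the claim becomes the triangle inequality for the sine of the angle
  between unit vectors (`sqrt_one_sub_sq_le`).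
-/

open Matrix
open scoped ComplexOrder

/-- Real power of a Hermitian matrix via the spectral decomposition (junk value `0`
if the matrix is not Hermitian). -/
noncomputable def mpow {d : Type*} [Fintype d] [DecidableEq d]
    (M : Matrix d d ℂ) (c : ℝ) : Matrix d d ℂ :=
  if hM : M.IsHermitian then hM.cfc (fun t => t ^ c) else 0

/-- The generalized fidelity of sub-normalized states,
`F̄(ρ,τ) = (tr √(√τ ρ √τ) + √((1 - tr ρ)(1 - tr τ)))²`. -/
noncomputable def gFidelity {d : Type*} [Fintype d] [DecidableEq d]
    (ρ τ : Matrix d d ℂ) : ℝ :=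
  (((mpow (mpow τ (1/2) * ρ * mpow τ (1/2)) (1/2)).trace).re
    + Real.sqrt ((1 - ρ.trace.re) * (1 - τ.trace.re))) ^ 2

/-- The purified distance of sub-normalized states, `P(ρ,τ) = √(1 - F̄(ρ,τ))`. -/
noncomputable def purifiedDist {d : Type*} [Fintype d] [DecidableEq d]
    (ρ τ : Matrix d d ℂ) : ℝ :=
  Real.sqrt (1 - gFidelity ρ τ)

/-! ### Singular values and square roots -/

/-- A matrix with orthogonal columns of lengths `√(l i)` is a unitary times `diag (√(l i))`: normalise
the nonzero columns and complete them to an orthonormal basis. -/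
lemma exists_unitary_mul_diagonal {n : ℕ} (M : Matrix (Fin n) (Fin n) ℂ) (l : Fin n → ℝ)
    (hl : ∀ i, 0 ≤ l i) (hM : Mᴴ * M = diagonal (fun i => (l i : ℂ))) :
    ∃ W : Matrix (Fin n) (Fin n) ℂ, W ∈ unitaryGroup (Fin n) ℂ ∧
      M = W * diagonal (fun i => ((Real.sqrt (l i) : ℝ) : ℂ)) := by
  have hMij : ∀ i j, ∑ k, star (M k i) * M k j = if i = j then (l i : ℂ) else 0 := by
    intro i j
    have := congrFun (congrFun hM i) j
    simpa [Matrix.mul_apply, diagonal_apply] using this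
  let v : Fin n → EuclideanSpace ℂ (Fin n) := fun i =>
    WithLp.toLp 2 (fun k => M k i / ((Real.sqrt (l i) : ℝ) : ℂ))
  let S : Set (Fin n) := {i | l i ≠ 0}
  have hv : Orthonormal ℂ (S.domRestrict v) := by
    rw [orthonormal_iff_ite]
    rintro ⟨i, hi⟩ ⟨j, hj⟩
    have hi0 : ((Real.sqrt (l i) : ℝ) : ℂ) ≠ 0 := by
      exact_mod_cast (Real.sqrt_pos.2 (lt_of_le_of_ne (hl i) (Ne.symm hi))).ne'
    have h1 : inner ℂ (v i) (v j) = (∑ k, star (M k i) * M k j) /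
        (((Real.sqrt (l i) : ℝ) : ℂ) * ((Real.sqrt (l j) : ℝ) : ℂ)) := by
      rw [PiLp.inner_apply, Finset.sum_div]
      refine Finset.sum_congr rfl fun k _ => ?_
      simp [v, Complex.conj_ofReal]
      ring
    change inner ℂ (v i) (v j) = _
    rw [h1, hMij]
    by_cases hij : i = j
    · subst hij
      have : ((Real.sqrt (l i) : ℝ) : ℂ) * ((Real.sqrt (l i) : ℝ) : ℂ) = (l i : ℂ) := by
        rw [← Complex.ofReal_mul, Real.mul_self_sqrt (hl i)]
      rw [this]
      have hi' : (l i : ℂ) ≠ 0 := by exact_mod_cast hi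
      simp [hi']
    · simp [hij]
  obtain ⟨b, hb⟩ := hv.exists_orthonormalBasis_extension_of_card_eq (by simp)
  refine ⟨Matrix.of fun k i => b i k, ?_, ?_⟩
  · rw [mem_unitaryGroup_iff', star_eq_conjTranspose]
    ext i j
    have := (orthonormal_iff_ite.1 b.orthonormal) i j
    rw [PiLp.inner_apply] at this
    simp only [RCLike.inner_apply] at this
    rw [Matrix.mul_apply, Matrix.one_apply, ← this]
    refine Finset.sum_congr rfl fun k _ => ?_
    simp [mul_comm]
  · ext k i
    rw [Matrix.mul_diagonal]
    by_cases hi : l i = 0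
    · have h := hMij i i
      have h2 : ∑ k, ‖M k i‖ ^ 2 = 0 := by
        have h3 : ((∑ k, ‖M k i‖ ^ 2 : ℝ) : ℂ) = 0 := by
          push_cast
          rw [if_pos rfl, hi, Complex.ofReal_zero] at h
          rw [← h]
          refine Finset.sum_congr rfl fun k _ => ?_
          simpa using (Complex.conj_mul' (M k i)).symm
        exact_mod_cast h3
      have h4 := (Finset.sum_eq_zero_iff_of_nonneg (fun k _ => by positivity)).1 h2 k
        (Finset.mem_univ k)
      have h5 : M k i = 0 := by simpa using h4
      simp [h5, hi]
    · have hi0 : ((Real.sqrt (l i) : ℝ) : ℂ) ≠ 0 := by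
        exact_mod_cast (Real.sqrt_pos.2 (lt_of_le_of_ne (hl i) (Ne.symm hi))).ne'
      have := hb i hi
      simp [this, v, hi0]

/-- Spectral decomposition of a positive semidefinite matrix together with its square root. -/
lemma exists_spectral {n : ℕ} (M : Matrix (Fin n) (Fin n) ℂ) (hM : M.PosSemidef) :
    ∃ (V : Matrix (Fin n) (Fin n) ℂ) (l : Fin n → ℝ), V ∈ unitaryGroup (Fin n) ℂ ∧
      (∀ i, 0 ≤ l i) ∧ M = V * diagonal (fun i => (l i : ℂ)) * Vᴴ ∧
      mpow M (1/2) = V * diagonal (fun i => ((Real.sqrt (l i) : ℝ) : ℂ)) * Vᴴ := by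
  refine ⟨hM.isHermitian.eigenvectorUnitary, hM.isHermitian.eigenvalues, Subtype.prop _,
    hM.eigenvalues_nonneg, ?_, ?_⟩
  · conv_lhs => rw [hM.isHermitian.spectral_theorem]
    rfl
  · rw [mpow, dif_pos hM.isHermitian, IsHermitian.cfc, Unitary.conjStarAlgAut_apply]
    congr 3
    funext i
    simp [Real.sqrt_eq_rpow]

lemma mpow_half_isHermitian {n : ℕ} {M : Matrix (Fin n) (Fin n) ℂ} (hM : M.PosSemidef) :
    (mpow M (1/2))ᴴ = mpow M (1/2) := by
  obtain ⟨V, l, hV, hl, h1, h2⟩ := exists_spectral M hM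
  rw [h2]
  have : star (fun i => ((Real.sqrt (l i) : ℝ) : ℂ)) = fun i => ((Real.sqrt (l i) : ℝ) : ℂ) := by
    funext i
    simp [Complex.conj_ofReal]
  simp [conjTranspose_mul, diagonal_conjTranspose, this, Matrix.mul_assoc]

lemma mpow_half_mul_self {n : ℕ} {M : Matrix (Fin n) (Fin n) ℂ} (hM : M.PosSemidef) :
    mpow M (1/2) * mpow M (1/2) = M := by
  obtain ⟨V, l, hV, hl, h1, h2⟩ := exists_spectral M hM
  have hV' : Vᴴ * V = 1 := mem_unitaryGroup_iff'.1 hV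
  rw [h2]
  conv_rhs => rw [h1]
  calc _ = V * (diagonal (fun i => ((Real.sqrt (l i) : ℝ) : ℂ)) * (Vᴴ * V) *
          diagonal (fun i => ((Real.sqrt (l i) : ℝ) : ℂ))) * Vᴴ := by
        simp only [Matrix.mul_assoc]
    _ = _ := by
        rw [hV', Matrix.mul_one, diagonal_mul_diagonal]
        simp only [← Complex.ofReal_mul, Real.mul_self_sqrt (hl _)]

/-- Singular value decomposition, with `tr √(Aᴴ A)` expressed as the sum of the singular values. -/
lemma exists_svd {n : ℕ} (A : Matrix (Fin n) (Fin n) ℂ) :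
    ∃ (W V : Matrix (Fin n) (Fin n) ℂ) (d : Fin n → ℝ), W ∈ unitaryGroup (Fin n) ℂ ∧
      V ∈ unitaryGroup (Fin n) ℂ ∧ (∀ i, 0 ≤ d i) ∧
      A = W * diagonal (fun i => (d i : ℂ)) * Vᴴ ∧
      (mpow (Aᴴ * A) (1/2)).trace.re = ∑ i, d i := by
  obtain ⟨V, l, hV, hl, h1, h2⟩ := exists_spectral (Aᴴ * A) (posSemidef_conjTranspose_mul_self A)
  have hV1 : Vᴴ * V = 1 := mem_unitaryGroup_iff'.1 hV
  have hV2 : V * Vᴴ = 1 := mem_unitaryGroup_iff.1 hV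
  obtain ⟨W, hW, hAV⟩ := exists_unitary_mul_diagonal (A * V) l hl (by
    calc (A * V)ᴴ * (A * V) = Vᴴ * (Aᴴ * A) * V := by
          simp only [conjTranspose_mul, Matrix.mul_assoc]
      _ = (Vᴴ * V) * diagonal (fun i => (l i : ℂ)) * (Vᴴ * V) := by
          rw [h1]; simp only [Matrix.mul_assoc]
      _ = _ := by rw [hV1, Matrix.one_mul, Matrix.mul_one])
  refine ⟨W, V, fun i => Real.sqrt (l i), hW, hV, fun i => Real.sqrt_nonneg _, ?_, ?_⟩
  · rw [← hAV, Matrix.mul_assoc, hV2, Matrix.mul_one]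
  · rw [h2, trace_mul_comm, ← Matrix.mul_assoc, hV1, Matrix.one_mul, trace_diagonal]
    simp

/-! ### The trace norm as a maximum over unitaries -/

lemma re_trace_mul_le {n : ℕ} (A U : Matrix (Fin n) (Fin n) ℂ)
    (hU : U ∈ unitaryGroup (Fin n) ℂ) :
    (A * U).trace.re ≤ (mpow (Aᴴ * A) (1/2)).trace.re := by
  obtain ⟨W, V, d, hW, hV, hd, hA, ht⟩ := exists_svd A
  rw [ht]
  have hQ : Vᴴ * U * W ∈ unitaryGroup (Fin n) ℂ :=
    mul_mem (mul_mem (Unitary.star_mem hV) hU) hW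
  have h1 : (A * U).trace = (diagonal (fun i => (d i : ℂ)) * (Vᴴ * U * W)).trace := by
    rw [hA, Matrix.mul_assoc, Matrix.mul_assoc, trace_mul_comm]
    simp only [Matrix.mul_assoc]
  rw [h1, Matrix.trace, Complex.re_sum]
  refine Finset.sum_le_sum fun i _ => ?_
  rw [diag_apply, diagonal_mul, Complex.re_ofReal_mul]
  have h2 := (Complex.re_le_norm _).trans (entry_norm_bound_of_unitary hQ i i)
  exact mul_le_of_le_one_right (hd i) h2

lemma exists_re_trace_mul_eq {n : ℕ} (A : Matrix (Fin n) (Fin n) ℂ) :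
    ∃ U ∈ unitaryGroup (Fin n) ℂ, (A * U).trace.re = (mpow (Aᴴ * A) (1/2)).trace.re := by
  obtain ⟨W, V, d, hW, hV, hd, hA, ht⟩ := exists_svd A
  have hV1 : Vᴴ * V = 1 := mem_unitaryGroup_iff'.1 hV
  have hW1 : Wᴴ * W = 1 := mem_unitaryGroup_iff'.1 hW
  refine ⟨V * Wᴴ, mul_mem hV (Unitary.star_mem hW), ?_⟩
  rw [ht]
  have h1 : (A * (V * Wᴴ)).trace = (diagonal (fun i => (d i : ℂ))).trace := by
    calc (A * (V * Wᴴ)).trace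
        = (W * (diagonal (fun i => (d i : ℂ)) * (Vᴴ * V) * Wᴴ)).trace := by
          rw [hA]; simp only [Matrix.mul_assoc]
      _ = _ := by
          rw [hV1, Matrix.mul_one, trace_mul_comm, Matrix.mul_assoc, hW1, Matrix.mul_one]
  rw [h1, trace_diagonal]
  simp

/-! ### Purifications and Uhlmann's theorem -/

/-- The square root of the generalized fidelity. -/
noncomputable def rootFidelity {n : ℕ} (ρ τ : Matrix (Fin n) (Fin n) ℂ) : ℝ :=
  (mpow (mpow τ (1/2) * ρ * mpow τ (1/2)) (1/2)).trace.re
    + Real.sqrt ((1 - ρ.trace.re) * (1 - τ.trace.re))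

/-- The vector `(X, a)`, with `a` real, of the Hilbert space `ℂ^{n×n} ⊕ ℂ`. -/
noncomputable def pairVec {n : ℕ} (X : Matrix (Fin n) (Fin n) ℂ) (a : ℝ) :
    EuclideanSpace ℂ ((Fin n × Fin n) ⊕ Unit) :=
  WithLp.toLp 2 (Sum.elim (fun p => X p.1 p.2) (fun _ => (a : ℂ)))

lemma inner_pairVec {n : ℕ} (X Y : Matrix (Fin n) (Fin n) ℂ) (a b : ℝ) :
    inner ℝ (pairVec X a) (pairVec Y b) = (Xᴴ * Y).trace.re + a * b := by
  rw [PiLp.inner_apply, Fintype.sum_sum_type, Fintype.sum_prod_type,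
    Finset.sum_comm]
  simp [pairVec, Complex.inner, Matrix.trace, Matrix.mul_apply, mul_comm]

lemma pairVec_injective {n : ℕ} {X Y : Matrix (Fin n) (Fin n) ℂ} {a b : ℝ}
    (h : pairVec X a = pairVec Y b) : X = Y := by
  ext i j
  simpa [pairVec] using congrArg (fun v => v (Sum.inl (i, j))) h

lemma norm_pairVec_eq_one {n : ℕ} {ρ U : Matrix (Fin n) (Fin n) ℂ} (hρ : ρ.PosSemidef)
    (hρ1 : ρ.trace.re ≤ 1) (hU : U ∈ unitaryGroup (Fin n) ℂ) :
    ‖pairVec (mpow ρ (1/2) * U) (Real.sqrt (1 - ρ.trace.re))‖ = 1 := by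
  have hU2 : U * Uᴴ = 1 := mem_unitaryGroup_iff.1 hU
  have h : ‖pairVec (mpow ρ (1/2) * U) (Real.sqrt (1 - ρ.trace.re))‖ ^ 2 = 1 := by
    rw [← real_inner_self_eq_norm_sq, inner_pairVec, Real.mul_self_sqrt (by linarith),
      trace_mul_comm, conjTranspose_mul, mpow_half_isHermitian hρ]
    have : mpow ρ (1/2) * U * (Uᴴ * mpow ρ (1/2)) = ρ := by
      rw [Matrix.mul_assoc, ← Matrix.mul_assoc U, hU2, Matrix.one_mul, mpow_half_mul_self hρ]
    rw [this]; ring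
  exact (pow_eq_one_iff_of_nonneg (norm_nonneg _) two_ne_zero).1 h

lemma conj_eq {n : ℕ} {ρ τ : Matrix (Fin n) (Fin n) ℂ} (hρ : ρ.PosSemidef) (hτ : τ.PosSemidef) :
    (mpow ρ (1/2) * mpow τ (1/2))ᴴ * (mpow ρ (1/2) * mpow τ (1/2)) =
      mpow τ (1/2) * ρ * mpow τ (1/2) := by
  rw [conjTranspose_mul, mpow_half_isHermitian hρ, mpow_half_isHermitian hτ]
  conv_rhs => rw [← mpow_half_mul_self hρ]
  simp only [Matrix.mul_assoc]

/-- The inner product of the purifications `√ρ` and `√τ U` is at most `√F̄(ρ,τ)`. -/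
lemma le_rootFidelity {n : ℕ} {ρ τ U : Matrix (Fin n) (Fin n) ℂ} (hρ : ρ.PosSemidef)
    (hρ1 : ρ.trace.re ≤ 1) (hτ : τ.PosSemidef) (hU : U ∈ unitaryGroup (Fin n) ℂ) :
    (mpow ρ (1/2) * mpow τ (1/2) * U).trace.re +
      Real.sqrt (1 - ρ.trace.re) * Real.sqrt (1 - τ.trace.re) ≤ rootFidelity ρ τ := by
  have := re_trace_mul_le (mpow ρ (1/2) * mpow τ (1/2)) U hU
  rw [conj_eq hρ hτ] at this
  rw [rootFidelity, Real.sqrt_mul (by linarith)]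
  linarith

/-- Uhlmann's theorem: some purification attains `√F̄`. -/
lemma exists_eq_rootFidelity {n : ℕ} {ρ τ : Matrix (Fin n) (Fin n) ℂ} (hρ : ρ.PosSemidef)
    (hρ1 : ρ.trace.re ≤ 1) (hτ : τ.PosSemidef) :
    ∃ U ∈ unitaryGroup (Fin n) ℂ, rootFidelity ρ τ = (mpow ρ (1/2) * mpow τ (1/2) * U).trace.re +
      Real.sqrt (1 - ρ.trace.re) * Real.sqrt (1 - τ.trace.re) := by
  obtain ⟨U, hU, h⟩ := exists_re_trace_mul_eq (mpow ρ (1/2) * mpow τ (1/2))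
  refine ⟨U, hU, ?_⟩
  rw [conj_eq hρ hτ] at h
  rw [rootFidelity, Real.sqrt_mul (by linarith), h]

lemma rootFidelity_nonneg {n : ℕ} {ρ τ : Matrix (Fin n) (Fin n) ℂ} (hρ : ρ.PosSemidef)
    (hτ : τ.PosSemidef) : 0 ≤ rootFidelity ρ τ := by
  obtain ⟨W, V, d, -, -, hd, -, ht⟩ := exists_svd (mpow ρ (1/2) * mpow τ (1/2))
  rw [conj_eq hρ hτ] at ht
  rw [rootFidelity, ht]
  exact add_nonneg (Finset.sum_nonneg fun i _ => hd i) (Real.sqrt_nonneg _)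

lemma rootFidelity_le_swap {n : ℕ} {ρ τ : Matrix (Fin n) (Fin n) ℂ} (hρ : ρ.PosSemidef)
    (hρ1 : ρ.trace.re ≤ 1) (hτ : τ.PosSemidef) (hτ1 : τ.trace.re ≤ 1) :
    rootFidelity ρ τ ≤ rootFidelity τ ρ := by
  obtain ⟨U, hU, h⟩ := exists_eq_rootFidelity hρ hρ1 hτ
  have h1 := le_rootFidelity hτ hτ1 hρ (Unitary.star_mem hU)
  have h2 : (mpow τ (1/2) * mpow ρ (1/2) * star U).trace =
      star (mpow ρ (1/2) * mpow τ (1/2) * U).trace := by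
    rw [← trace_conjTranspose, conjTranspose_mul, conjTranspose_mul, mpow_half_isHermitian hρ,
      mpow_half_isHermitian hτ, trace_mul_comm, star_eq_conjTranspose]
  have h3 : (star (mpow ρ (1/2) * mpow τ (1/2) * U).trace).re =
      (mpow ρ (1/2) * mpow τ (1/2) * U).trace.re := Complex.conj_re _
  rw [h2, h3] at h1
  linarith [mul_comm (Real.sqrt (1 - ρ.trace.re)) (Real.sqrt (1 - τ.trace.re))]

/-! ### The metric axioms -/

/-- Triangle inequality for the sine of the angle between unit vectors.  The bound
`g` on the cosine between `x` and `y` need not be attained: in the application it is the maximum of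
this cosine over all purifications. -/
lemma sqrt_one_sub_sq_le {E : Type*} [NormedAddCommGroup E] [InnerProductSpace ℝ E] {x y z : E}
    (hx : ‖x‖ = 1) (hy : ‖y‖ = 1) (hz : ‖z‖ = 1) {a b g : ℝ} (ha : 0 ≤ a) (hb : 0 ≤ b)
    (hxz : inner ℝ x z = a) (hzy : inner ℝ z y = b) (hg : inner ℝ x y ≤ g) :
    Real.sqrt (1 - g ^ 2) ≤ Real.sqrt (1 - a ^ 2) + Real.sqrt (1 - b ^ 2) := by
  have hxx : inner ℝ x x = (1 : ℝ) := by rw [real_inner_self_eq_norm_sq, hx]; norm_num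
  have hyy : inner ℝ y y = (1 : ℝ) := by rw [real_inner_self_eq_norm_sq, hy]; norm_num
  have hzz : inner ℝ z z = (1 : ℝ) := by rw [real_inner_self_eq_norm_sq, hz]; norm_num
  have hyz : inner ℝ y z = b := by rw [real_inner_comm, hzy]
  have hzx : inner ℝ z x = a := by rw [real_inner_comm, hxz]
  have e1 : ‖x - a • z‖ ^ 2 = 1 - a ^ 2 := by
    rw [← real_inner_self_eq_norm_sq]
    simp only [inner_sub_left, inner_sub_right, inner_smul_left, inner_smul_right, hxx, hzz, hxz,
      hzx, conj_trivial]
    ring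
  have e2 : ‖y - b • z‖ ^ 2 = 1 - b ^ 2 := by
    rw [← real_inner_self_eq_norm_sq]
    simp only [inner_sub_left, inner_sub_right, inner_smul_left, inner_smul_right, hyy, hzz, hyz,
      hzy, conj_trivial]
    ring
  have e3 : inner ℝ (x - a • z) (y - b • z) = inner ℝ x y - a * b := by
    simp only [inner_sub_left, inner_sub_right, inner_smul_left, inner_smul_right, hzz, hxz,
      hzy, conj_trivial]
    ring
  -- Cauchy–Schwarz for the components of `x` and `y` orthogonal to `z`
  have hcs := (abs_le.1 (abs_real_inner_le_norm (x - a • z) (y - b • z))).1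
  rw [e3] at hcs
  have hp : Real.sqrt (1 - a ^ 2) = ‖x - a • z‖ := by rw [← e1, Real.sqrt_sq (norm_nonneg _)]
  have hq : Real.sqrt (1 - b ^ 2) = ‖y - b • z‖ := by rw [← e2, Real.sqrt_sq (norm_nonneg _)]
  rw [hp, hq]
  have hp0 := norm_nonneg (x - a • z)
  have hq0 := norm_nonneg (y - b • z)
  generalize ‖x - a • z‖ = p at *
  generalize ‖y - b • z‖ = q at *
  refine Real.sqrt_le_iff.2 ⟨by positivity, ?_⟩
  have ha1 : a ≤ 1 := by nlinarith
  have hb1 : b ≤ 1 := by nlinarith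
  have hp1 : p ^ 2 + a ^ 2 = 1 := by linarith
  have hq1 : q ^ 2 + b ^ 2 = 1 := by linarith
  rcases le_total (p * q) (a * b) with h | h
  · -- the angles add up to at most `π / 2`
    have h1 : (a * b - p * q) ^ 2 ≤ g ^ 2 := by
      apply pow_le_pow_left₀ <;> linarith
    have h2 : 1 - (a * b - p * q) ^ 2 = (a * q + b * p) ^ 2 := by
      linear_combination -(q ^ 2 + b ^ 2) * hp1 - hq1
    have h3 : (a * q + b * p) ^ 2 ≤ (p + q) ^ 2 := by
      apply pow_le_pow_left₀ (by positivity)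
      nlinarith
    linarith
  · -- the angles add up to at least `π / 2`, so the right-hand side is at least `1`
    have h1 : (a * b) ^ 2 ≤ (p * q) ^ 2 := pow_le_pow_left₀ (by positivity) h 2
    have h2 : (p * q) ^ 2 - (a * b) ^ 2 = p ^ 2 + q ^ 2 - 1 := by
      linear_combination -b ^ 2 * hp1 - (1 - p ^ 2) * hq1
    nlinarith [sq_nonneg g, mul_nonneg hp0 hq0]

lemma purifiedDist_eq {n : ℕ} (ρ τ : Matrix (Fin n) (Fin n) ℂ) :
    purifiedDist ρ τ = Real.sqrt (1 - rootFidelity ρ τ ^ 2) := rfl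

lemma rootFidelity_self {n : ℕ} {ρ : Matrix (Fin n) (Fin n) ℂ} (hρ : ρ.PosSemidef)
    (hρ1 : ρ.trace.re ≤ 1) : 1 ≤ rootFidelity ρ ρ := by
  have h := le_rootFidelity hρ hρ1 hρ (one_mem (unitaryGroup (Fin n) ℂ))
  rw [Matrix.mul_one, mpow_half_mul_self hρ, Real.mul_self_sqrt (by linarith)] at h
  linarith

lemma eq_of_one_le_rootFidelity {n : ℕ} {ρ τ : Matrix (Fin n) (Fin n) ℂ} (hρ : ρ.PosSemidef)
    (hρ1 : ρ.trace.re ≤ 1) (hτ : τ.PosSemidef) (hτ1 : τ.trace.re ≤ 1)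
    (h : 1 ≤ rootFidelity ρ τ) : ρ = τ := by
  obtain ⟨U, hU, hg⟩ := exists_eq_rootFidelity hρ hρ1 hτ
  have hU2 : U * Uᴴ = 1 := mem_unitaryGroup_iff.1 hU
  have n1 := norm_pairVec_eq_one hρ hρ1 (one_mem (unitaryGroup (Fin n) ℂ))
  have n2 := norm_pairVec_eq_one hτ hτ1 hU
  rw [Matrix.mul_one] at n1
  have hi : inner ℝ (pairVec (mpow ρ (1/2)) (Real.sqrt (1 - ρ.trace.re)))
      (pairVec (mpow τ (1/2) * U) (Real.sqrt (1 - τ.trace.re))) = (1 : ℝ) := by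
    apply le_antisymm
    · have hle := real_inner_le_norm (pairVec (mpow ρ (1/2)) (Real.sqrt (1 - ρ.trace.re)))
        (pairVec (mpow τ (1/2) * U) (Real.sqrt (1 - τ.trace.re)))
      rwa [n1, n2, mul_one] at hle
    · rw [inner_pairVec, mpow_half_isHermitian hρ, ← Matrix.mul_assoc, ← hg]
      exact h
  have hs := pairVec_injective ((inner_eq_one_iff_of_norm_eq_one n1 n2).1 hi)
  calc ρ = mpow ρ (1/2) * (mpow ρ (1/2))ᴴ := by
        rw [mpow_half_isHermitian hρ, mpow_half_mul_self hρ]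
    _ = mpow τ (1/2) * (U * Uᴴ) * mpow τ (1/2) := by
        rw [hs, conjTranspose_mul, mpow_half_isHermitian hτ]
        simp only [Matrix.mul_assoc]
    _ = τ := by rw [hU2, Matrix.mul_one, mpow_half_mul_self hτ]

/-- **The purified distance is a metric on sub-normalized states**:
it is nonnegative and definite, symmetric, and satisfies the triangle inequality. -/
theorem purifiedDist_metric {n : ℕ} (ρ τ σ : Matrix (Fin n) (Fin n) ℂ)
    (hρ : ρ.PosSemidef) (hρ1 : ρ.trace.re ≤ 1)
    (hτ : τ.PosSemidef) (hτ1 : τ.trace.re ≤ 1)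
    (hσ : σ.PosSemidef) (hσ1 : σ.trace.re ≤ 1) :
    (0 ≤ purifiedDist ρ τ ∧ (purifiedDist ρ τ = 0 ↔ ρ = τ)) ∧
    purifiedDist ρ τ = purifiedDist τ ρ ∧
    purifiedDist ρ τ ≤ purifiedDist ρ σ + purifiedDist σ τ := by
  refine ⟨⟨Real.sqrt_nonneg _, fun h => ?_, ?_⟩, ?_, ?_⟩
  · rw [purifiedDist_eq, Real.sqrt_eq_zero'] at h
    refine eq_of_one_le_rootFidelity hρ hρ1 hτ hτ1 ?_
    nlinarith [rootFidelity_nonneg hρ hτ]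
  · rintro rfl
    rw [purifiedDist_eq, Real.sqrt_eq_zero']
    nlinarith [rootFidelity_self hρ hρ1]
  · rw [purifiedDist_eq, purifiedDist_eq, le_antisymm (rootFidelity_le_swap hρ hρ1 hτ hτ1)
      (rootFidelity_le_swap hτ hτ1 hρ hρ1)]
  · obtain ⟨U, hU, hα⟩ := exists_eq_rootFidelity hρ hρ1 hσ
    obtain ⟨V, hV, hβ⟩ := exists_eq_rootFidelity hσ hσ1 hτ
    have hU2 : U * Uᴴ = 1 := mem_unitaryGroup_iff.1 hU
    have hVU := mul_mem hV hU
    have n1 := norm_pairVec_eq_one hρ hρ1 (one_mem (unitaryGroup (Fin n) ℂ))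
    rw [Matrix.mul_one] at n1
    -- rotating the purifications of `σ` and `τ` by the same `U` preserves their inner product
    rw [purifiedDist_eq, purifiedDist_eq, purifiedDist_eq]
    refine sqrt_one_sub_sq_le n1 (norm_pairVec_eq_one hτ hτ1 hVU)
      (norm_pairVec_eq_one hσ hσ1 hU) (rootFidelity_nonneg hρ hσ) (rootFidelity_nonneg hσ hτ)
      ?_ ?_ ?_
    · rw [inner_pairVec, mpow_half_isHermitian hρ, ← Matrix.mul_assoc, hα]
    · rw [inner_pairVec, conjTranspose_mul, mpow_half_isHermitian hσ, hβ, Matrix.mul_assoc,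
        trace_mul_comm]
      have : mpow σ (1/2) * (mpow τ (1/2) * (V * U)) * Uᴴ =
          mpow σ (1/2) * mpow τ (1/2) * V * (U * Uᴴ) := by
        simp only [Matrix.mul_assoc]
      rw [this, hU2, Matrix.mul_one]
    · rw [inner_pairVec, mpow_half_isHermitian hρ, ← Matrix.mul_assoc]
      exact le_rootFidelity hρ hρ1 hτ hVU
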